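/- Let X ~ N(μ₀,σ₀²), σ₀ > 0, and for parameters (μ,σ) let X̂₁,...,X̂_P be i.i.d. N(μ,σ²) independent of X, with P ≥ 2. Define the regularizer L(μ,σ) = E|X − (1/P)∑ᵢX̂ᵢ| − β·γ_P·E[(1/P)∑ᵢ|X̂ᵢ − (1/P)∑ₖX̂ₖ|], where γ_P = √(πP/(2(P−1))) and β = √(2/(πP(P+1))). Then the unique minimizer of L over (μ,σ) ∈ ℝ × (0,∞) is (μ₀, σ₀). -/

import Mathlib

open MeasureTheory ProbabilityTheory
open scoped NNReal

/-- The joint law of a true sample `X ~ N(μ₀,σ₀²)` and `P` independent generated samples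
`X̂ᵢ ~ i.i.d. N(m,σ²)`, realized on the canonical space `ℝ × (Fin P → ℝ)`. -/
noncomputable def jointLaw (μ₀ σ₀ : ℝ) (P : ℕ) (m σ : ℝ) : Measure (ℝ × (Fin P → ℝ)) :=
  (gaussianReal μ₀ ⟨σ₀ ^ 2, sq_nonneg σ₀⟩).prod
    (Measure.pi fun _ : Fin P => gaussianReal m ⟨σ ^ 2, sq_nonneg σ⟩)

/-- The regularizer `L(m,σ) = E|X − (1/P)∑ᵢX̂ᵢ| − β·γ_P·E[(1/P)∑ᵢ|X̂ᵢ − (1/P)∑ₖX̂ₖ|]`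
with `γ_P = √(πP/(2(P−1)))` and `β = √(2/(πP(P+1)))`, where `X ~ N(μ₀,σ₀²)` and
`X̂₁,...,X̂_P` are i.i.d. `N(m,σ²)` independent of `X`. -/
noncomputable def regLoss (μ₀ σ₀ : ℝ) (P : ℕ) (m σ : ℝ) : ℝ :=
  (∫ p, |p.1 - (∑ i, p.2 i) / (P : ℝ)| ∂(jointLaw μ₀ σ₀ P m σ))
    - Real.sqrt (2 / (Real.pi * P * (P + 1))) * Real.sqrt (Real.pi * P / (2 * (P - 1)))
      * ∫ p, (∑ i, |p.2 i - (∑ k, p.2 k) / (P : ℝ)|) / (P : ℝ) ∂(jointLaw μ₀ σ₀ P m σ)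

/-! For a centred Gaussian, `E|Z|` is `√(2/π)` times the standard deviation, so `γ_P` is exactly the
factor that turns the mean absolute deviation of the sample into an unbiased estimator of `σ`.
Since `X - X̄ ~ N(μ₀ - m, σ₀² + σ²/P)`, the loss is
`L(m,σ) = E|N(μ₀ - m, σ₀² + σ²/P)| - √(2/π) σ / √(P(P+1))`.
Only the first term depends on `m`; by the symmetry of the Gaussian and the convexity of `|·|` it is
smallest at `m = μ₀`. There `L` is the strictly convex function `√(2/π) √(σ₀² + σ²/P)` of `σ` minus
the linear function `β σ`, and `β` is exactly the slope of the former at `σ₀`. -/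

section MeanAbsoluteValue

theorem integral_norm_lt_integral_norm_add_const {E : Type*} [NormedAddCommGroup E]
    [NormedSpace ℝ E] [MeasurableSpace E] [BorelSpace E] {μ : Measure E} [IsFiniteMeasure μ]
    [μ.IsNegInvariant] [μ.IsOpenPosMeasure] (hμ : Integrable (fun x ↦ x) μ) {a : E} (ha : a ≠ 0) :
    ∫ x, ‖x‖ ∂μ < ∫ x, ‖x + a‖ ∂μ := by
  have int_add (b : E) : Integrable (fun x ↦ ‖x + b‖) μ := (hμ.add (integrable_const b)).norm
  have int_sum : Integrable (fun x ↦ ‖x + a‖ + ‖x + -a‖) μ := (int_add a).add (int_add (-a))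
  have int_two : Integrable (fun x ↦ 2 * ‖x‖) μ := hμ.norm.const_mul 2
  have reflect : ∫ x, ‖x + -a‖ ∂μ = ∫ x, ‖x + a‖ ∂μ := by
    rw [← integral_neg_eq_self]
    simp only [← neg_add, norm_neg]
  have convex (x : E) : 0 ≤ ‖x + a‖ + ‖x + -a‖ - 2 * ‖x‖ := by
    have := norm_add_le (x + a) (x + -a)
    rw [add_add_add_comm, add_neg_cancel, add_zero, ← two_smul ℝ x, norm_smul] at this
    simpa using this
  have gap_pos : 0 < ∫ x, ‖x + a‖ + ‖x + -a‖ - 2 * ‖x‖ ∂μ :=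
    integral_pos_of_integrable_nonneg_nonzero (x := 0) (by fun_prop) (int_sum.sub int_two) convex
      (by simpa using ha)
  rw [integral_sub int_sum int_two, integral_add (int_add a) (int_add (-a)), integral_const_mul,
    reflect] at gap_pos
  linarith

instance isNegInvariant_gaussianReal_zero (v : ℝ≥0) : (gaussianReal 0 v).IsNegInvariant where
  neg_eq_self := gaussianReal_map_neg.trans (by rw [neg_zero])

theorem isOpenPosMeasure_gaussianReal (a : ℝ) {v : ℝ≥0} (hv : v ≠ 0) :
    (gaussianReal a v).IsOpenPosMeasure :=
  (gaussianReal_absolutelyContinuous' a hv).isOpenPosMeasure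

theorem integral_abs_gaussianReal_zero_lt {a : ℝ} (ha : a ≠ 0) {v : ℝ≥0} (hv : v ≠ 0) :
    ∫ x, |x| ∂gaussianReal 0 v < ∫ x, |x| ∂gaussianReal a v := by
  have := isOpenPosMeasure_gaussianReal 0 hv
  rw [← zero_add a, ← gaussianReal_map_add_const, integral_map (by fun_prop) (by fun_prop)]
  exact integral_norm_lt_integral_norm_add_const
    (memLp_one_iff_integrable.1 (memLp_id_gaussianReal 1)) ha

theorem integral_Ioi_mul_exp_neg_mul_sq {b : ℝ} (hb : 0 < b) :
    ∫ x in Set.Ioi (0 : ℝ), x * Real.exp (-b * x ^ 2) = (2 * b)⁻¹ := by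
  have := integral_rpow_mul_exp_neg_mul_rpow two_pos (by norm_num : (-1 : ℝ) < 1) hb
  norm_num [Real.rpow_neg_one, mul_comm] at this ⊢
  exact this

theorem integral_abs_gaussianReal_zero (v : ℝ≥0) :
    ∫ x, |x| ∂gaussianReal 0 v = √(2 / Real.pi) * √v := by
  rcases eq_or_ne v 0 with rfl | hv
  · simp
  have : (0 : ℝ) < v := by positivity
  calc ∫ x, |x| ∂gaussianReal 0 v
      = ∫ x, (√(2 * Real.pi * v))⁻¹ * (|x| * Real.exp (-(2 * v : ℝ)⁻¹ * |x| ^ 2)) := by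
        rw [integral_gaussianReal_eq_integral_smul hv]
        congr with x
        rw [gaussianPDFReal, sub_zero, smul_eq_mul, sq_abs, mul_assoc, mul_comm |x|,
          neg_div, neg_mul, div_eq_inv_mul (x ^ 2), mul_comm (Real.exp _)]
    _ = (√(2 * Real.pi * v))⁻¹ * (2 * v) := by
        rw [integral_const_mul,
          integral_comp_abs (f := fun x ↦ x * Real.exp (-(2 * v : ℝ)⁻¹ * x ^ 2)),
          integral_Ioi_mul_exp_neg_mul_sq (by positivity)]
        field_simp
    _ = √(2 / Real.pi) * √v := by
        rw [← Real.sqrt_mul (by positivity), inv_mul_eq_div, eq_comm,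
          Real.sqrt_eq_iff_eq_sq (by positivity) (by positivity), div_pow,
          Real.sq_sqrt (by positivity)]
        field_simp

end MeanAbsoluteValue

section GaussianSample

variable {Ω : Type*} [MeasurableSpace Ω] {μ : Measure Ω}

theorem hasLaw_sub_gaussianReal {X Y : Ω → ℝ} {a b : ℝ} {v w : ℝ≥0}
    (hX : HasLaw X (gaussianReal a v) μ) (hY : HasLaw Y (gaussianReal b w) μ)
    (hXY : IndepFun X Y μ) :
    HasLaw (fun ω ↦ X ω - Y ω) (gaussianReal (a - b) (v + w)) μ := by
  have hsum := (hXY.comp measurable_id measurable_neg).hasLaw_add hX (gaussianReal_neg hY)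
  rw [gaussianReal_conv_gaussianReal] at hsum
  simpa only [sub_eq_add_neg] using! hsum

variable {ι : Type*} [Fintype ι] {Y : ι → Ω → ℝ}

theorem hasLaw_sum_const_mul_gaussianReal {a : ι → ℝ} {v : ι → ℝ≥0}
    (hY : ∀ i, HasLaw (Y i) (gaussianReal (a i) (v i)) μ) (hindep : iIndepFun Y μ) (c : ι → ℝ) :
    HasLaw (fun ω ↦ ∑ i, c i * Y i ω)
      (gaussianReal (∑ i, c i * a i) (∑ i, ‖c i‖₊ ^ 2 * v i)) μ := by
  have := hindep.isProbabilityMeasure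
  have hc (i : ι) : HasGaussianLaw (fun ω ↦ c i * Y i ω) μ := (hY i).hasGaussianLaw.fun_smul (c i)
  have hindep_c : iIndepFun (fun i ω ↦ c i * Y i ω) μ :=
    hindep.comp (fun i x ↦ c i * x) fun i ↦ by fun_prop
  have mean : ∫ ω, ∑ i, c i * Y i ω ∂μ = ∑ i, c i * a i := by
    rw [integral_finsetSum _ fun i _ ↦ (hc i).integrable]
    simp only [integral_const_mul, (hY _).integral_eq, integral_id_gaussianReal]
  have var : Var[fun ω ↦ ∑ i, c i * Y i ω; μ] = ∑ i, c i ^ 2 * v i := by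
    rw [← Finset.sum_fn, IndepFun.variance_sum (fun i _ ↦ (hc i).memLp_two)
      fun i _ j _ hij ↦ hindep_c.indepFun hij]
    simp only [variance_const_mul, (hY _).variance_eq, variance_id_gaussianReal]
  have var_toNNReal : (∑ i, c i ^ 2 * v i : ℝ).toNNReal = ∑ i, ‖c i‖₊ ^ 2 * v i := by
    rw [← Real.toNNReal_coe (r := ∑ i, ‖c i‖₊ ^ 2 * v i)]
    simp
  have hsum := iIndepFun.hasGaussianLaw_fun_sum hc hindep_c
  exact ⟨hsum.aemeasurable, by rw [hsum.map_eq_gaussianReal, mean, var, var_toNNReal]⟩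

theorem sum_ite_sub_inv_card_sq [DecidableEq ι] (i : ι) :
    ∑ k, ((if k = i then 1 else 0) - (Fintype.card ι : ℝ)⁻¹) ^ 2 = 1 - (Fintype.card ι : ℝ)⁻¹ := by
  have : Nonempty ι := ⟨i⟩
  simp only [sub_sq, Finset.sum_add_distrib, Finset.sum_sub_distrib, ← Finset.sum_mul,
    ← Finset.mul_sum]
  simp only [ite_pow, one_pow, zero_pow two_ne_zero, Finset.sum_ite_eq', Finset.mem_univ, if_true,
    mul_one, inv_pow, Finset.sum_const, Finset.card_univ, nsmul_eq_mul]
  field_simp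
  ring

variable {a : ℝ} {v : ℝ≥0} (hY : ∀ i, HasLaw (Y i) (gaussianReal a v) μ) (hindep : iIndepFun Y μ)

include hY hindep

theorem hasLaw_average_gaussianReal [Nonempty ι] :
    HasLaw (fun ω ↦ (∑ i, Y i ω) / Fintype.card ι) (gaussianReal a (v / Fintype.card ι)) μ := by
  convert hasLaw_sum_const_mul_gaussianReal hY hindep fun _ ↦ (Fintype.card ι : ℝ)⁻¹ using 2
  · rw [← Finset.mul_sum, inv_mul_eq_div]
  · simp
  · rw [Finset.sum_const, Finset.card_univ, nsmul_eq_mul, nnnorm_inv, Real.nnnorm_natCast]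
    field_simp

theorem hasLaw_sub_average_gaussianReal (i : ι) :
    HasLaw (fun ω ↦ Y i ω - (∑ k, Y k ω) / Fintype.card ι)
      (gaussianReal 0 ((1 - (Fintype.card ι : ℝ≥0)⁻¹) * v)) μ := by
  classical
  have : Nonempty ι := ⟨i⟩
  convert hasLaw_sum_const_mul_gaussianReal hY hindep
    fun k ↦ (if k = i then 1 else 0) - (Fintype.card ι : ℝ)⁻¹ using 2
  · simp [sub_mul, Finset.sum_div, inv_mul_eq_div]
  · simp [← Finset.sum_mul]
  · have card_inv_le : (Fintype.card ι : ℝ≥0)⁻¹ ≤ 1 :=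
      inv_le_one_of_one_le₀ (by exact_mod_cast Fintype.card_pos)
    rw [← Finset.sum_mul]
    congr
    ext
    simp [sum_ite_sub_inv_card_sq, NNReal.coe_sub card_inv_le]

theorem integral_average_abs_sub_average [Nonempty ι] :
    ∫ ω, (∑ i, |Y i ω - (∑ k, Y k ω) / Fintype.card ι|) / Fintype.card ι ∂μ
      = √(2 / Real.pi) * √((1 - (Fintype.card ι : ℝ)⁻¹) * v) := by
  have card_inv_le : (Fintype.card ι : ℝ≥0)⁻¹ ≤ 1 :=
    inv_le_one_of_one_le₀ (by exact_mod_cast Fintype.card_pos)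
  have hdev := hasLaw_sub_average_gaussianReal hY hindep
  have abs_dev (i : ι) : ∫ ω, |Y i ω - (∑ k, Y k ω) / Fintype.card ι| ∂μ
      = √(2 / Real.pi) * √((1 - (Fintype.card ι : ℝ)⁻¹) * v) := by
    refine ((hdev i).integral_comp (f := fun x ↦ |x|) (by fun_prop)).trans ?_
    rw [integral_abs_gaussianReal_zero]
    simp [NNReal.coe_sub card_inv_le]
  rw [integral_div, integral_finsetSum _ fun i _ ↦ (hdev i).hasGaussianLaw.integrable.abs]
  simp [abs_dev]

end GaussianSample

/-- The left-hand side is the intercept of the tangent line of `t ↦ √(s² + t²/p)` at `t = s`, whose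
slope is `1 / √(p(p+1))`. -/
theorem sqrt_sq_add_sq_div_sub_lt {p s t : ℝ} (hp : 0 < p) (hs : 0 ≤ s) (hts : t ≠ s) :
    √(s ^ 2 + s ^ 2 / p) - s / √(p * (p + 1)) < √(s ^ 2 + t ^ 2 / p) - t / √(p * (p + 1)) := by
  have hR : √(p * (p + 1)) ^ 2 = p * (p + 1) := Real.sq_sqrt (by positivity)
  have hR_pos : 0 < √(p * (p + 1)) := by positivity
  set R := √(p * (p + 1))
  have value_at_s : √(s ^ 2 + s ^ 2 / p) = (p * s + s) / R := by
    rw [Real.sqrt_eq_iff_eq_sq (by positivity) (by positivity), div_pow, hR]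
    field_simp
  have intercept : (p * s + s) / R - s / R = (p * s + t) / R - t / R := by ring
  have defect : s ^ 2 + t ^ 2 / p - ((p * s + t) / R) ^ 2 = (s - t) ^ 2 / (p + 1) := by
    rw [div_pow, hR]
    field_simp
    ring
  have defect_pos : 0 < (s - t) ^ 2 / (p + 1) := by
    have := sub_ne_zero.2 hts.symm
    positivity
  rw [value_at_s, intercept]
  gcongr
  exact Real.lt_sqrt_of_sq_lt (by linarith)

theorem hasLaw_eval_pi {ι : Type*} [Fintype ι] {E : ι → Type*} [∀ i, MeasurableSpace (E i)]
    (μ : ∀ i, Measure (E i)) [∀ i, IsProbabilityMeasure (μ i)] (i : ι) :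
    HasLaw (fun x ↦ x i) (μ i) (Measure.pi μ) :=
  (measurePreserving_eval μ i).hasLaw

section RegularizedLoss

variable (μ₀ σ₀ : ℝ) (P : ℕ) (m σ : ℝ)

theorem jointLaw_eq_prod_pi : jointLaw μ₀ σ₀ P m σ =
    (gaussianReal μ₀ (‖σ₀‖₊ ^ 2)).prod (Measure.pi fun _ : Fin P ↦ gaussianReal m (‖σ‖₊ ^ 2)) := by
  have mk_sq (s : ℝ) : NNReal.mk (s ^ 2) (sq_nonneg s) = ‖s‖₊ ^ 2 := by ext; simp
  rw [← mk_sq σ₀, ← mk_sq σ]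
  rfl

theorem integral_abs_sub_average_jointLaw [NeZero P] :
    ∫ p, |p.1 - (∑ i, p.2 i) / (P : ℝ)| ∂jointLaw μ₀ σ₀ P m σ
      = ∫ x, |x| ∂gaussianReal (μ₀ - m) (‖σ₀‖₊ ^ 2 + ‖σ‖₊ ^ 2 / P) := by
  have havg := hasLaw_average_gaussianReal
    (hasLaw_eval_pi fun _ : Fin P ↦ gaussianReal m (‖σ‖₊ ^ 2))
    (iIndepFun_pi (X := fun _ x ↦ x) fun _ ↦ by fun_prop)
  rw [Fintype.card_fin] at havg
  rw [jointLaw_eq_prod_pi]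
  have hsub := hasLaw_sub_gaussianReal
    (measurePreserving_fst (μ := gaussianReal μ₀ (‖σ₀‖₊ ^ 2))).hasLaw
    (havg.comp measurePreserving_snd.hasLaw)
    (indepFun_prod (X := id) (Y := fun y : Fin P → ℝ ↦ (∑ i, y i) / (P : ℝ)) measurable_id
      (by fun_prop))
  exact hsub.integral_comp (f := fun x ↦ |x|) (by fun_prop)

theorem integral_average_abs_sub_average_jointLaw [NeZero P] :
    ∫ p, (∑ i, |p.2 i - (∑ k, p.2 k) / (P : ℝ)|) / (P : ℝ) ∂jointLaw μ₀ σ₀ P m σ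
      = √(2 / Real.pi) * √((1 - (P : ℝ)⁻¹) * σ ^ 2) := by
  have hpi := integral_average_abs_sub_average
    (hasLaw_eval_pi fun _ : Fin P ↦ gaussianReal m (‖σ‖₊ ^ 2))
    (iIndepFun_pi (X := fun _ x ↦ x) fun _ ↦ by fun_prop)
  simp only [Fintype.card_fin] at hpi
  rw [jointLaw_eq_prod_pi, integral_fun_snd
    (f := fun y : Fin P → ℝ ↦ (∑ i, |y i - (∑ k, y k) / (P : ℝ)|) / (P : ℝ)), hpi]
  simp

theorem beta_mul_gamma_mul_sqrt {n : ℝ} (hn : 1 < n) :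
    √(2 / (Real.pi * n * (n + 1))) * √(Real.pi * n / (2 * (n - 1))) * √((1 - n⁻¹) * σ ^ 2)
      = |σ| / √(n * (n + 1)) := by
  have : 0 < n - 1 := sub_pos.2 hn
  rw [← Real.sqrt_mul (by positivity), ← Real.sqrt_mul (by positivity), ← Real.sqrt_sq_eq_abs,
    ← Real.sqrt_div (by positivity)]
  congr 1
  field_simp

variable {P}

theorem regLoss_eq (hP : 2 ≤ P) :
    regLoss μ₀ σ₀ P m σ
      = ∫ x, |x| ∂gaussianReal (μ₀ - m) (‖σ₀‖₊ ^ 2 + ‖σ‖₊ ^ 2 / P)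
        - √(2 / Real.pi) * (|σ| / √(P * (P + 1))) := by
  have : NeZero P := ⟨by omega⟩
  rw [regLoss, integral_abs_sub_average_jointLaw, integral_average_abs_sub_average_jointLaw,
    ← beta_mul_gamma_mul_sqrt σ (by exact_mod_cast hP)]
  ring

theorem regLoss_self_mean (hP : 2 ≤ P) :
    regLoss μ₀ σ₀ P μ₀ σ
      = √(2 / Real.pi) * (√(σ₀ ^ 2 + |σ| ^ 2 / P) - |σ| / √(P * (P + 1))) := by
  rw [regLoss_eq μ₀ σ₀ μ₀ σ hP, sub_self, integral_abs_gaussianReal_zero, ← mul_sub]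
  simp

variable {m σ₀ σ}

theorem regLoss_self_mean_lt (hP : 2 ≤ P) (hσ₀ : σ₀ ≠ 0) (hm : m ≠ μ₀) :
    regLoss μ₀ σ₀ P μ₀ σ < regLoss μ₀ σ₀ P m σ := by
  rw [regLoss_eq μ₀ σ₀ μ₀ σ hP, regLoss_eq μ₀ σ₀ m σ hP, sub_self]
  have : 0 < ‖σ₀‖₊ := nnnorm_pos.2 hσ₀
  gcongr
  exact integral_abs_gaussianReal_zero_lt (sub_ne_zero.2 hm.symm) (by positivity)

theorem regLoss_self_lt (hP : 2 ≤ P) (hσ₀ : 0 ≤ σ₀) (hσ : |σ| ≠ σ₀) :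
    regLoss μ₀ σ₀ P μ₀ σ₀ < regLoss μ₀ σ₀ P μ₀ σ := by
  have hP_pos : (0 : ℝ) < P := by exact_mod_cast (by omega : 0 < P)
  rw [regLoss_self_mean μ₀ σ₀ σ₀ hP, regLoss_self_mean μ₀ σ₀ σ hP, abs_of_nonneg hσ₀]
  gcongr ?_ * ?_
  exact sqrt_sq_add_sq_div_sub_lt hP_pos hσ₀ hσ

end RegularizedLoss

/-- With `σ₀ > 0` and `P ≥ 2`, the unique minimizer of
`L(m,σ)` over `(m,σ) ∈ ℝ × (0,∞)` is `(μ₀, σ₀)`. -/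
theorem stmt7 (μ₀ σ₀ : ℝ) (hσ₀ : 0 < σ₀) (P : ℕ) (hP : 2 ≤ P) :
    ∀ m σ : ℝ, 0 < σ → (m, σ) ≠ (μ₀, σ₀) →
      regLoss μ₀ σ₀ P μ₀ σ₀ < regLoss μ₀ σ₀ P m σ := by
  intro m σ hσ hne
  have scale_lt (h : σ ≠ σ₀) : regLoss μ₀ σ₀ P μ₀ σ₀ < regLoss μ₀ σ₀ P μ₀ σ :=
    regLoss_self_lt μ₀ hP hσ₀.le (by rwa [abs_of_pos hσ])
  by_cases hm : m = μ₀
  · subst hm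
    exact scale_lt fun h ↦ hne (by rw [h])
  · have mean_lt := regLoss_self_mean_lt μ₀ (σ := σ) hP hσ₀.ne' hm
    by_cases h : σ = σ₀
    · rwa [h] at mean_lt ⊢
    · exact (scale_lt h).trans mean_lt
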